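/- arXiv:1403.5509 — 2 statements merged into one kernel-verified Lean document; each statement's English description precedes it below -/
import Mathlib

section
/- Let U be a complex vector space, n ∈ ℕ, 0 ≤ k ≤ n−1, and J = {j_1 < j_2 < ⋯ < j_k} ⊆ {1,…,n}; let f_J ∈ Inj_k^n be the map i ↦ j_i. Let u, v_{j_1}, …, v_{j_k} ∈ U. Then in U^{⊗(k+1)} ⊗ ℂ[Inj_{k+1}^n]: e_{S_{k+1}}( Σ_{l=1}^{k+1} Σ_{g ∈ Inj_{k+1}^n, g strictly increasing, g∘ι_l = f_J} u^{(l)}(v_{j_1}⊗⋯⊗v_{j_k}) ⊗ g ) = (1/(k+1)!) Σ_{l=1}^{k+1} Σ_{σ ∈ S_k} (u^{(l)} ∘ P_σ)(v_{j_1}⊗⋯⊗v_{j_k}) ⊗ (res_l^*)(f_J ∘ σ⁻¹). -/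
open scoped TensorProduct

noncomputable section

/-- The permutation action `P_τ` of `τ ∈ S_k` on `U^{⊗k}`:
`w₁ ⊗ ⋯ ⊗ w_k ↦ w_{τ⁻¹(1)} ⊗ ⋯ ⊗ w_{τ⁻¹(k)}`. -/
def permTP (U : Type) [AddCommGroup U] [Module ℂ U] (k : ℕ) (τ : Equiv.Perm (Fin k)) :
    (⨂[ℂ] _ : Fin k, U) →ₗ[ℂ] ⨂[ℂ] _ : Fin k, U :=
  (PiTensorProduct.reindex ℂ (fun _ : Fin k => U) τ).toLinearMap

/-- `ℂ[Inj_k^n]`: the free complex vector space on the set of injective maps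
`{1,…,k} → {1,…,n}`. -/
abbrev InjSp (k n : ℕ) : Type := (Fin k ↪ Fin n) →₀ ℂ

/-- The action of `τ ∈ S_k` on `ℂ[Inj_k^n]` by `f ↦ f ∘ τ⁻¹` on basis elements. -/
def kActInj (k n : ℕ) (τ : Equiv.Perm (Fin k)) : InjSp k n →ₗ[ℂ] InjSp k n :=
  Finsupp.lmapDomain ℂ ℂ (fun f : Fin k ↪ Fin n => (τ⁻¹ : Equiv.Perm (Fin k)).toEmbedding.trans f)

/-- The diagonal action of `τ ∈ S_k` on `U^{⊗k} ⊗ ℂ[Inj_k^n]`: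
`τ · ((w₁⊗⋯⊗w_k) ⊗ f) = (w_{τ⁻¹(1)}⊗⋯⊗w_{τ⁻¹(k)}) ⊗ (f ∘ τ⁻¹)`. -/
def diagAct (U : Type) [AddCommGroup U] [Module ℂ U] (k n : ℕ) (τ : Equiv.Perm (Fin k)) :
    (⨂[ℂ] _ : Fin k, U) ⊗[ℂ] InjSp k n →ₗ[ℂ] (⨂[ℂ] _ : Fin k, U) ⊗[ℂ] InjSp k n :=
  TensorProduct.map (permTP U k τ) (kActInj k n τ)

/-- `res_l^* : ℂ[Inj_k^n] → ℂ[Inj_{k+1}^n]`, defined on basis elements by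
`f ↦ Σ_{g : g ∘ ι_l = f} g`. -/
def resStar (n k : ℕ) (l : Fin (k + 1)) : InjSp k n →ₗ[ℂ] InjSp (k + 1) n :=
  letI : DecidableEq (Fin k ↪ Fin n) := Classical.decEq _
  Finsupp.lsum ℂ fun f : Fin k ↪ Fin n =>
    LinearMap.toSpanSingleton ℂ (InjSp (k + 1) n)
      (∑ g : Fin (k + 1) ↪ Fin n with (Fin.succAboveEmb l).trans g = f, Finsupp.single g 1)

/-!
Every injection `h : Fin (k + 1) ↪ Fin n` is `g ∘ τ⁻¹` for a unique permutation `τ` and a unique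
strictly increasing `g`. In a term of the right-hand side, write the inserted position as `τ l`;
then `h ∘ ι_{τ l} = f_J ∘ σ⁻¹` says `g ∘ ι_l = f_J ∘ σ⁻¹ ∘ τ'`, where `τ'` is `τ` with the pair
`l ↦ τ l` deleted. Both `g ∘ ι_l` and `f_J` are strictly increasing, which forces `σ = τ'`. So the
right-hand side is a sum over triples `(τ, l, g)` with `g ∘ ι_l = f_J`, and its terms are the
translates by `τ` of the terms on the left.
-/

section Combinatorics

variable {k : ℕ}

/-- The permutation of `Fin k` obtained from `τ` by deleting `l` from the source and `τ l` from the
target, both complements being identified with `Fin k` in increasing order. -/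
def permDelete (τ : Equiv.Perm (Fin (k + 1))) (l : Fin (k + 1)) : Equiv.Perm (Fin k) :=
  (finSuccAboveEquiv l).trans
    ((τ.subtypeEquiv (q := (· ≠ τ l)) fun _ => τ.injective.ne_iff.symm).trans
      (finSuccAboveEquiv (τ l)).symm)

lemma succAbove_permDelete (τ : Equiv.Perm (Fin (k + 1))) (l : Fin (k + 1)) (i : Fin k) :
    (τ l).succAbove (permDelete τ l i) = τ (l.succAbove i) :=
  congrArg Subtype.val ((finSuccAboveEquiv (τ l)).apply_symm_apply
    ⟨τ (l.succAbove i), τ.injective.ne (l.succAbove_ne i)⟩)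

lemma insertNth_permDelete {β : Type*} (τ : Equiv.Perm (Fin (k + 1))) (l : Fin (k + 1)) (a : β)
    (v : Fin k → β) :
    (τ l).insertNth (α := fun _ => β) a (fun i => v ((permDelete τ l)⁻¹ i)) =
      fun j => l.insertNth (α := fun _ => β) a v (τ⁻¹ j) := by
  refine Fin.insertNth_eq_iff.mpr ⟨by simp, funext fun i => ?_⟩
  obtain ⟨i, rfl⟩ := (permDelete τ l).surjective i
  simp [Fin.removeNth, succAbove_permDelete]

lemma strictMono_eq_comp_perm_iff {ι α : Type*} [LinearOrder ι] [WellFoundedLT ι] [Preorder α]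
    {f g : ι → α} (hf : StrictMono f) (hg : StrictMono g) {ρ : Equiv.Perm ι} :
    g = f ∘ ρ ↔ ρ = 1 ∧ g = f := by
  refine ⟨fun h => ?_, by rintro ⟨rfl, rfl⟩; rfl⟩
  have hgf : g = f := (hg.range_inj hf).mp (h ▸ ρ.surjective.range_comp f)
  exact ⟨Equiv.ext fun i => hf.injective (congrFun (h.symm.trans hgf) i), hgf⟩

variable {α : Type*} [LinearOrder α]

lemma bijective_perm_inv_trans_strictMono :
    Function.Bijective fun p : Equiv.Perm (Fin k) × {g : Fin k ↪ α // StrictMono g} =>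
      p.1⁻¹.toEmbedding.trans p.2.1 := by
  refine ⟨?_, fun h => ?_⟩
  · rintro ⟨τ, g, hg⟩ ⟨τ', g', hg'⟩ h
    have hcomp : ⇑g' = g ∘ (τ⁻¹ * τ') := funext fun i => by
      simpa using (DFunLike.congr_fun h (τ' i)).symm
    obtain ⟨hτ, hgg'⟩ := (strictMono_eq_comp_perm_iff hg hg').mp hcomp
    obtain rfl := inv_mul_eq_one.mp hτ
    obtain rfl := DFunLike.coe_injective hgg'
    rfl
  · have hsort : StrictMono ((Tuple.sort h).toEmbedding.trans h) :=
      (Tuple.monotone_sort h).strictMono_of_injective (h.injective.comp (Equiv.injective _))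
    exact ⟨⟨Tuple.sort h, _, hsort⟩, by ext; simp⟩

lemma succAboveEmb_trans_perm_inv_trans_eq_iff {f : Fin k ↪ α} {g : Fin (k + 1) ↪ α}
    (hf : StrictMono f) (hg : StrictMono g) (τ : Equiv.Perm (Fin (k + 1))) (l : Fin (k + 1))
    (σ : Equiv.Perm (Fin k)) :
    (τ l).succAboveEmb.trans (τ⁻¹.toEmbedding.trans g) = σ⁻¹.toEmbedding.trans f ↔
      permDelete τ l = σ ∧ l.succAboveEmb.trans g = f := by
  have hgl : StrictMono (g ∘ l.succAbove) := hg.comp l.strictMono_succAbove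
  calc (τ l).succAboveEmb.trans (τ⁻¹.toEmbedding.trans g) = σ⁻¹.toEmbedding.trans f
    _ ↔ g ∘ l.succAbove = f ∘ (σ⁻¹ * permDelete τ l) := by
      rw [DFunLike.ext_iff, ← (permDelete τ l).forall_congr_right, funext_iff]
      simp [succAbove_permDelete]
    _ ↔ σ⁻¹ * permDelete τ l = 1 ∧ g ∘ l.succAbove = f := strictMono_eq_comp_perm_iff hf hgl
    _ ↔ permDelete τ l = σ ∧ l.succAboveEmb.trans g = f := by
      rw [inv_mul_eq_one, eq_comm (a := σ), DFunLike.ext'_iff (f := l.succAboveEmb.trans g)]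
      rfl

variable {M : Type*} [AddCommMonoid M]

lemma sum_extensions_perm_inv_trans [DecidableEq (Fin k ↪ α)] {f : Fin k ↪ α}
    {g : Fin (k + 1) ↪ α} (hf : StrictMono f) (hg : StrictMono g) (τ : Equiv.Perm (Fin (k + 1)))
    (F : Fin (k + 1) → Equiv.Perm (Fin k) → M) :
    (∑ m, ∑ σ, if m.succAboveEmb.trans (τ⁻¹.toEmbedding.trans g) = σ⁻¹.toEmbedding.trans f
        then F m σ else 0) =
      ∑ l, if l.succAboveEmb.trans g = f then F (τ l) (permDelete τ l) else 0 := by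
  rw [← Equiv.sum_comp τ]
  simp only [succAboveEmb_trans_perm_inv_trans_eq_iff hf hg, ite_and, Finset.sum_ite_eq,
    Finset.mem_univ, if_true]

variable [Fintype α]

lemma sum_embedding_eq_sum_perm_sum_strictMono
    [DecidablePred fun g : Fin k ↪ α => StrictMono g] (F : (Fin k ↪ α) → M) :
    ∑ h, F h = ∑ τ : Equiv.Perm (Fin k), ∑ g ∈ {g : Fin k ↪ α | StrictMono g},
      F (τ⁻¹.toEmbedding.trans g) := by
  rw [← bijective_perm_inv_trans_strictMono.sum_comp, Fintype.sum_prod_type]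
  exact Finset.sum_congr rfl fun τ _ =>
    (Finset.sum_subtype _ (fun _ => Finset.mem_filter_univ _)
      fun g => F (τ⁻¹.toEmbedding.trans g)).symm

theorem sum_extensions_eq_sum_perm_sum_strictMono_extensions [DecidableEq (Fin k ↪ α)]
    [DecidablePred fun g : Fin (k + 1) ↪ α => StrictMono g] {f : Fin k ↪ α} (hf : StrictMono f)
    (F : Fin (k + 1) → Equiv.Perm (Fin k) → (Fin (k + 1) ↪ α) → M) :
    ∑ m, ∑ σ, ∑ h with m.succAboveEmb.trans h = σ⁻¹.toEmbedding.trans f, F m σ h =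
      ∑ τ : Equiv.Perm (Fin (k + 1)), ∑ l,
        ∑ g ∈ {g : Fin (k + 1) ↪ α | StrictMono g ∧ l.succAboveEmb.trans g = f},
          F (τ l) (permDelete τ l) (τ⁻¹.toEmbedding.trans g) := by
  calc ∑ m, ∑ σ, ∑ h with m.succAboveEmb.trans h = σ⁻¹.toEmbedding.trans f, F m σ h
    _ = ∑ h, ∑ m, ∑ σ,
          if m.succAboveEmb.trans h = σ⁻¹.toEmbedding.trans f then F m σ h else 0 := by
      simp only [Finset.sum_filter]
      rw [Finset.sum_comm_cycle]
    _ = ∑ τ : Equiv.Perm (Fin (k + 1)), ∑ g ∈ {g : Fin (k + 1) ↪ α | StrictMono g}, ∑ l,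
          if l.succAboveEmb.trans g = f
            then F (τ l) (permDelete τ l) (τ⁻¹.toEmbedding.trans g) else 0 := by
      rw [sum_embedding_eq_sum_perm_sum_strictMono]
      refine Finset.sum_congr rfl fun τ _ => Finset.sum_congr rfl fun g hg => ?_
      exact sum_extensions_perm_inv_trans hf (Finset.mem_filter.mp hg).2 τ
        fun m σ => F m σ (τ⁻¹.toEmbedding.trans g)
    _ = _ := by
      refine Finset.sum_congr rfl fun τ _ => ?_
      rw [Finset.sum_comm]
      simp only [← Finset.sum_filter, Finset.filter_filter]

end Combinatorics

lemma resStar_single {n k : ℕ} [DecidableEq (Fin k ↪ Fin n)] (l : Fin (k + 1))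
    (f : Fin k ↪ Fin n) (c : ℂ) :
    resStar n k l (Finsupp.single f c) =
      ∑ h : Fin (k + 1) ↪ Fin n with l.succAboveEmb.trans h = f, Finsupp.single h c := by
  simp only [resStar, Finsupp.lsum_single, LinearMap.toSpanSingleton_apply,
    Finset.smul_sum, Finsupp.smul_single_one]
  congr!

section DiagonalAction

variable {U : Type} [AddCommGroup U] [Module ℂ U] {n k : ℕ}

lemma diagAct_tprod_tmul_single (τ : Equiv.Perm (Fin k)) (w : Fin k → U) (g : Fin k ↪ Fin n)
    (c : ℂ) :
    diagAct U k n τ (PiTensorProduct.tprod ℂ w ⊗ₜ[ℂ] Finsupp.single g c) =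
      PiTensorProduct.tprod ℂ (fun i => w (τ⁻¹ i)) ⊗ₜ[ℂ]
        Finsupp.single (τ⁻¹.toEmbedding.trans g) c := by
  simp only [diagAct, permTP, kActInj, TensorProduct.map_tmul, LinearEquiv.coe_coe,
    Finsupp.lmapDomain_apply, Finsupp.mapDomain_single, PiTensorProduct.reindex_tprod]
  rfl

lemma diagAct_tprod_insertNth_tmul_single (τ : Equiv.Perm (Fin (k + 1))) (l : Fin (k + 1)) (u : U)
    (v : Fin k → U) (g : Fin (k + 1) ↪ Fin n) (c : ℂ) :
    diagAct U (k + 1) n τ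
        (PiTensorProduct.tprod ℂ (l.insertNth u v) ⊗ₜ[ℂ] Finsupp.single g c) =
      PiTensorProduct.tprod ℂ ((τ l).insertNth u fun i => v ((permDelete τ l)⁻¹ i)) ⊗ₜ[ℂ]
        Finsupp.single (τ⁻¹.toEmbedding.trans g) c := by
  rw [diagAct_tprod_tmul_single, insertNth_permDelete]

end DiagonalAction

/-- Averaging identity used to show the complex tensor power interpolates the classical one:
for `0 ≤ k ≤ n − 1`, `J = {j₁ < ⋯ < j_k} ⊆ {1,…,n}` with associated injection `f_J : i ↦ j_i`,
`u, v_{j₁}, …, v_{j_k} ∈ U`, one has in `U^{⊗(k+1)} ⊗ ℂ[Inj_{k+1}^n]`: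
`e_{S_{k+1}}( Σ_{l=1}^{k+1} Σ_{g strictly increasing, g∘ι_l = f_J} u^{(l)}(v_{j₁}⊗⋯⊗v_{j_k}) ⊗ g )`
`= (1/(k+1)!) Σ_{l=1}^{k+1} Σ_{σ ∈ S_k} (u^{(l)} ∘ P_σ)(v_{j₁}⊗⋯⊗v_{j_k}) ⊗ res_l^*(f_J ∘ σ⁻¹)`. -/
theorem averaging_insertion (U : Type) [AddCommGroup U] [Module ℂ U]
    (n k : ℕ) (hk : k < n) (fJ : Fin k ↪ Fin n) (hfJ : StrictMono fJ)
    (u : U) (v : Fin k → U) :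
    letI : DecidableEq (Fin k ↪ Fin n) := Classical.decEq _
    letI : ∀ (g : Fin (k + 1) ↪ Fin n), Decidable (StrictMono g) := fun _ => Classical.dec _
    (((k + 1).factorial : ℂ))⁻¹ •
        ∑ τ : Equiv.Perm (Fin (k + 1)), diagAct U (k + 1) n τ
          (∑ l : Fin (k + 1),
            ∑ g ∈ Finset.univ.filter
              (fun g : Fin (k + 1) ↪ Fin n =>
                StrictMono ⇑g ∧ (Fin.succAboveEmb l).trans g = fJ),
              (PiTensorProduct.tprod ℂ (l.insertNth u v)) ⊗ₜ[ℂ] Finsupp.single g 1)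
      = (((k + 1).factorial : ℂ))⁻¹ •
          ∑ l : Fin (k + 1), ∑ σ : Equiv.Perm (Fin k),
            (PiTensorProduct.tprod ℂ (l.insertNth u (fun i => v (σ⁻¹ i)))) ⊗ₜ[ℂ]
              resStar n k l
                (Finsupp.single ((σ⁻¹ : Equiv.Perm (Fin k)).toEmbedding.trans fJ) 1) := by
  congr 1
  simp only [map_sum, diagAct_tprod_insertNth_tmul_single, resStar_single, TensorProduct.tmul_sum]
  convert (sum_extensions_eq_sum_perm_sum_strictMono_extensions hfJ fun m σ h =>
    PiTensorProduct.tprod ℂ (m.insertNth u fun i => v (σ⁻¹ i)) ⊗ₜ[ℂ] Finsupp.single h (1 : ℂ)).symm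
end
end

section
/- Let U be a complex vector space, n ∈ ℕ, 0 ≤ k ≤ n−1, and J = {j_1 < j_2 < ⋯ < j_{k+1}} ⊆ {1,…,n}; let f_J ∈ Inj_{k+1}^n be the map i ↦ j_i. Let λ ∈ U* and v_{j_1}, …, v_{j_{k+1}} ∈ U. Then in U^{⊗k} ⊗ ℂ[Inj_k^n]: e_{S_k}( Σ_{l=1}^{k+1} λ^{(l)}(v_{j_1}⊗⋯⊗v_{j_{k+1}}) ⊗ res_l(f_J) ) = (1/(k+1)!) Σ_{l=1}^{k+1} Σ_{σ ∈ S_{k+1}} (λ^{(l)} ∘ P_σ)(v_{j_1}⊗⋯⊗v_{j_{k+1}}) ⊗ res_l(f_J ∘ σ⁻¹). -/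
open scoped TensorProduct

noncomputable section

/-- `res_l : ℂ[Inj_{k+1}^n] → ℂ[Inj_k^n]`, defined on basis elements by `g ↦ g ∘ ι_l`, where
`ι_l` is the order-preserving injection `{1,…,k} → {1,…,k+1}` omitting `l`. -/
def resMap (n k : ℕ) (l : Fin (k + 1)) : InjSp (k + 1) n →ₗ[ℂ] InjSp k n :=
  Finsupp.lmapDomain ℂ ℂ (fun g : Fin (k + 1) ↪ Fin n => (Fin.succAboveEmb l).trans g)

/-!
The right-hand side is `D (e_{S_{k+1}} (v_{j₁} ⊗ ⋯ ⊗ v_{j_{k+1}} ⊗ f_J))` with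
`D = ∑ l, λ^{(l)} ⊗ res_l`, so the identity is a case of `e_{S_k} ∘ D = D ∘ e_{S_{k+1}}`.
If `σ` sends `m` to `l`, it restricts to a bijection of the complements of `m` and `l`, that is, to
some `τ ∈ S_k`, and `(λ^{(l)} ⊗ res_l) ∘ σ = τ ∘ (λ^{(m)} ⊗ res_m)`. For fixed `l` the
correspondence `σ ↔ (m, τ)` is bijective, so each of the `k + 1` summands of `D` contributes
the same amount to `D ∘ ∑ σ`, namely `(∑ τ) ∘ D`.
-/

section ExtendPerm

variable {k : ℕ}

/-- The permutation of `k + 1` points that sends `m` to `l` and acts as `τ` between the complements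
of `m` and `l`, each identified with `Fin k` in increasing order. -/
def extendPerm (m l : Fin (k + 1)) (τ : Equiv.Perm (Fin k)) : Equiv.Perm (Fin (k + 1)) :=
  (finSuccEquiv' m).trans (τ.optionCongr.trans (finSuccEquiv' l).symm)

theorem extendPerm_apply_self (m l : Fin (k + 1)) (τ : Equiv.Perm (Fin k)) :
    extendPerm m l τ m = l := by
  simp [extendPerm]

theorem extendPerm_apply_succAbove (m l : Fin (k + 1)) (τ : Equiv.Perm (Fin k)) (i : Fin k) :
    extendPerm m l τ (m.succAbove i) = l.succAbove (τ i) := by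
  simp [extendPerm]

theorem extendPerm_symm (m l : Fin (k + 1)) (τ : Equiv.Perm (Fin k)) :
    (extendPerm m l τ).symm = extendPerm l m τ.symm :=
  rfl

theorem extendPerm_bijective (l : Fin (k + 1)) :
    Function.Bijective fun p : Fin (k + 1) × Equiv.Perm (Fin k) ↦ extendPerm p.1 l p.2 := by
  rw [Fintype.bijective_iff_injective_and_card]
  refine ⟨?_, by simp [Fintype.card_perm, Nat.factorial_succ]⟩
  rintro ⟨m, τ⟩ ⟨m', τ'⟩ (h : extendPerm m l τ = extendPerm m' l τ')
  obtain rfl : m = m' := (extendPerm m l τ).injective <| by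
    rw [extendPerm_apply_self, h, extendPerm_apply_self]
  refine Prod.ext rfl (Equiv.ext fun i ↦ Fin.succAbove_right_injective (p := l) ?_)
  rw [← extendPerm_apply_succAbove m, h, extendPerm_apply_succAbove]

theorem sum_perm_fin_succ {M : Type*} [AddCommMonoid M] (l : Fin (k + 1))
    (F : Equiv.Perm (Fin (k + 1)) → M) :
    ∑ σ, F σ = ∑ m, ∑ τ : Equiv.Perm (Fin k), F (extendPerm m l τ) := by
  rw [← (extendPerm_bijective l).sum_comp F, Fintype.sum_prod_type]

end ExtendPerm

section ContractAt

variable {R M : Type*} [CommSemiring R] [AddCommMonoid M] [Module R M] {k : ℕ}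

/-- The contraction `λ^{(l)}` of the `l`-th tensor factor against the linear form `lam`. -/
def contractAt (lam : M →ₗ[R] R) (l : Fin (k + 1)) :
    (⨂[R] _ : Fin (k + 1), M) →ₗ[R] ⨂[R] _ : Fin k, M :=
  PiTensorProduct.lift (LinearMap.uncurryMid l (lam.smulRight (PiTensorProduct.tprod R)))

theorem contractAt_tprod (lam : M →ₗ[R] R) (l : Fin (k + 1)) (w : Fin (k + 1) → M) :
    contractAt lam l (PiTensorProduct.tprod R w) =
      lam (w l) • PiTensorProduct.tprod R fun i ↦ w (l.succAbove i) :=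
  PiTensorProduct.lift.tprod w

theorem contractAt_comp_reindex_extendPerm (lam : M →ₗ[R] R) (m l : Fin (k + 1))
    (τ : Equiv.Perm (Fin k)) :
    contractAt lam l ∘ₗ (PiTensorProduct.reindex R (fun _ ↦ M) (extendPerm m l τ)).toLinearMap =
      (PiTensorProduct.reindex R (fun _ ↦ M) τ).toLinearMap ∘ₗ contractAt lam m := by
  refine PiTensorProduct.ext (MultilinearMap.ext fun w : Fin (k + 1) → M ↦ ?_)
  simp [contractAt_tprod, extendPerm_symm, extendPerm_apply_self, extendPerm_apply_succAbove]

end ContractAt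

theorem permTP_tprod {U : Type} [AddCommGroup U] [Module ℂ U] {k : ℕ} (τ : Equiv.Perm (Fin k))
    (w : Fin k → U) :
    permTP U k τ (PiTensorProduct.tprod ℂ w) = PiTensorProduct.tprod ℂ fun i ↦ w (τ⁻¹ i) :=
  PiTensorProduct.reindex_tprod τ w

theorem kActInj_single {k n : ℕ} (τ : Equiv.Perm (Fin k)) (f : Fin k ↪ Fin n) (c : ℂ) :
    kActInj k n τ (Finsupp.single f c) =
      Finsupp.single ((τ⁻¹ : Equiv.Perm (Fin k)).toEmbedding.trans f) c :=
  Finsupp.mapDomain_single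

theorem resMap_comp_kActInj_extendPerm {k n : ℕ} (m l : Fin (k + 1)) (τ : Equiv.Perm (Fin k)) :
    resMap n k l ∘ₗ kActInj (k + 1) n (extendPerm m l τ) = kActInj k n τ ∘ₗ resMap n k m := by
  simp only [resMap, kActInj, ← Finsupp.lmapDomain_comp]
  congr 1
  ext f i
  exact congrArg (fun j ↦ (f j : ℕ)) (extendPerm_apply_succAbove l m τ⁻¹ i)

section Averaging

variable {U : Type} [AddCommGroup U] [Module ℂ U]

theorem map_contractAt_resMap_comp_diagAct_extendPerm {k : ℕ} (n : ℕ) (lam : U →ₗ[ℂ] ℂ)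
    (m l : Fin (k + 1)) (τ : Equiv.Perm (Fin k)) :
    TensorProduct.map (contractAt lam l) (resMap n k l) ∘ₗ
        diagAct U (k + 1) n (extendPerm m l τ) =
      diagAct U k n τ ∘ₗ TensorProduct.map (contractAt lam m) (resMap n k m) := by
  simp only [diagAct, permTP, ← TensorProduct.map_comp, contractAt_comp_reindex_extendPerm,
    resMap_comp_kActInj_extendPerm]

variable (U) in
/-- The averaging projection `e_{S_k}` of `U^{⊗k} ⊗ ℂ[Inj_k^n]` onto its `S_k`-invariants. -/
def diagAverage (k n : ℕ) :
    (⨂[ℂ] _ : Fin k, U) ⊗[ℂ] InjSp k n →ₗ[ℂ] (⨂[ℂ] _ : Fin k, U) ⊗[ℂ] InjSp k n :=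
  (k.factorial : ℂ)⁻¹ • ∑ τ : Equiv.Perm (Fin k), diagAct U k n τ

theorem diagAverage_apply {k n : ℕ} (x : (⨂[ℂ] _ : Fin k, U) ⊗[ℂ] InjSp k n) :
    diagAverage U k n x =
      (k.factorial : ℂ)⁻¹ • ∑ τ : Equiv.Perm (Fin k), diagAct U k n τ x := by
  rw [diagAverage, LinearMap.smul_apply, LinearMap.sum_apply]

/-- The total contraction `∑ l, λ^{(l)} ⊗ res_l`. -/
def contractRes (k n : ℕ) (lam : U →ₗ[ℂ] ℂ) :
    (⨂[ℂ] _ : Fin (k + 1), U) ⊗[ℂ] InjSp (k + 1) n →ₗ[ℂ] (⨂[ℂ] _ : Fin k, U) ⊗[ℂ] InjSp k n :=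
  ∑ l, TensorProduct.map (contractAt lam l) (resMap n k l)

theorem contractRes_tprod_tmul {k n : ℕ} (lam : U →ₗ[ℂ] ℂ) (w : Fin (k + 1) → U)
    (x : InjSp (k + 1) n) :
    contractRes k n lam (PiTensorProduct.tprod ℂ w ⊗ₜ[ℂ] x) =
      ∑ l, lam (w l) •
        ((PiTensorProduct.tprod ℂ fun i ↦ w (l.succAbove i)) ⊗ₜ[ℂ] resMap n k l x) := by
  simp only [contractRes, LinearMap.sum_apply, TensorProduct.map_tmul, contractAt_tprod,
    TensorProduct.smul_tmul']

theorem sum_map_contractAt_resMap_comp_diagAct {k : ℕ} (n : ℕ) (lam : U →ₗ[ℂ] ℂ)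
    (l : Fin (k + 1)) :
    ∑ σ, TensorProduct.map (contractAt lam l) (resMap n k l) ∘ₗ diagAct U (k + 1) n σ =
      (∑ τ, diagAct U k n τ) ∘ₗ contractRes k n lam := by
  rw [sum_perm_fin_succ l]
  simp only [map_contractAt_resMap_comp_diagAct_extendPerm]
  refine LinearMap.ext fun x ↦ ?_
  simp only [contractRes, LinearMap.sum_apply, LinearMap.comp_apply, map_sum]

theorem contractRes_comp_sum_diagAct (k n : ℕ) (lam : U →ₗ[ℂ] ℂ) :
    contractRes k n lam ∘ₗ ∑ σ, diagAct U (k + 1) n σ =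
      ((k + 1 : ℕ) : ℂ) • (∑ τ, diagAct U k n τ) ∘ₗ contractRes k n lam :=
  calc
    contractRes k n lam ∘ₗ ∑ σ, diagAct U (k + 1) n σ =
        ∑ l, ∑ σ, TensorProduct.map (contractAt lam l) (resMap n k l) ∘ₗ
          diagAct U (k + 1) n σ := by
      refine LinearMap.ext fun x ↦ ?_
      simp only [contractRes, LinearMap.sum_apply, LinearMap.comp_apply, map_sum]
      rw [Finset.sum_comm]
    _ = ∑ _ : Fin (k + 1), (∑ τ, diagAct U k n τ) ∘ₗ contractRes k n lam :=
      Finset.sum_congr rfl fun l _ ↦ sum_map_contractAt_resMap_comp_diagAct n lam l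
    _ = ((k + 1 : ℕ) : ℂ) • (∑ τ, diagAct U k n τ) ∘ₗ contractRes k n lam := by
      rw [Finset.sum_const, Finset.card_univ, Fintype.card_fin, Nat.cast_smul_eq_nsmul]

theorem averaging_contraction_general (k n : ℕ) (lam : U →ₗ[ℂ] ℂ) :
    diagAverage U k n ∘ₗ contractRes k n lam =
      contractRes k n lam ∘ₗ diagAverage U (k + 1) n := by
  have factorial_inv : ((k + 1).factorial : ℂ)⁻¹ * (k + 1 : ℕ) = (k.factorial : ℂ)⁻¹ := by
    rw [Nat.factorial_succ, Nat.cast_mul, mul_inv_rev,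
      inv_mul_cancel_right₀ (Nat.cast_ne_zero.mpr k.succ_ne_zero)]
  rw [diagAverage, diagAverage, LinearMap.comp_smul, contractRes_comp_sum_diagAct, smul_smul,
    factorial_inv, LinearMap.smul_comp]

theorem contractRes_diagAverage_tprod_tmul_single {k n : ℕ} (lam : U →ₗ[ℂ] ℂ)
    (v : Fin (k + 1) → U) (f : Fin (k + 1) ↪ Fin n) :
    contractRes k n lam
        (diagAverage U (k + 1) n (PiTensorProduct.tprod ℂ v ⊗ₜ[ℂ] Finsupp.single f 1)) =
      ((k + 1).factorial : ℂ)⁻¹ • ∑ l, ∑ σ : Equiv.Perm (Fin (k + 1)), lam (v (σ⁻¹ l)) •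
        ((PiTensorProduct.tprod ℂ fun i ↦ v (σ⁻¹ (l.succAbove i))) ⊗ₜ[ℂ]
          resMap n k l (Finsupp.single
            ((σ⁻¹ : Equiv.Perm (Fin (k + 1))).toEmbedding.trans f) 1)) := by
  simp only [diagAverage_apply, map_smul, map_sum, diagAct, TensorProduct.map_tmul, permTP_tprod,
    kActInj_single, contractRes_tprod_tmul]
  rw [Finset.sum_comm]

end Averaging

/-- Averaging identity for contractions: for `0 ≤ k ≤ n − 1`,
`J = {j₁ < ⋯ < j_{k+1}} ⊆ {1,…,n}` with associated injection `f_J : i ↦ j_i`, `λ ∈ U*` and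
`v_{j₁}, …, v_{j_{k+1}} ∈ U`, one has in `U^{⊗k} ⊗ ℂ[Inj_k^n]`:
`e_{S_k}( Σ_{l=1}^{k+1} λ^{(l)}(v_{j₁}⊗⋯⊗v_{j_{k+1}}) ⊗ res_l(f_J) )`
`= (1/(k+1)!) Σ_{l=1}^{k+1} Σ_{σ ∈ S_{k+1}} (λ^{(l)} ∘ P_σ)(v_{j₁}⊗⋯⊗v_{j_{k+1}}) ⊗ res_l(f_J ∘ σ⁻¹)`,
where `λ^{(l)}` is the contraction `w₁⊗⋯⊗w_{k+1} ↦ λ(w_l)·w₁⊗⋯⊗w_{l−1}⊗w_{l+1}⊗⋯⊗w_{k+1}`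
(written out on the pure tensors to which it is applied). -/
theorem averaging_contraction (U : Type) [AddCommGroup U] [Module ℂ U]
    (n k : ℕ) (hk : k < n) (fJ : Fin (k + 1) ↪ Fin n) (hfJ : StrictMono fJ)
    (lam : U →ₗ[ℂ] ℂ) (v : Fin (k + 1) → U) :
    ((k.factorial : ℂ))⁻¹ •
        ∑ τ : Equiv.Perm (Fin k), diagAct U k n τ
          (∑ l : Fin (k + 1),
            lam (v l) •
              ((PiTensorProduct.tprod ℂ (fun i : Fin k => v (l.succAbove i))) ⊗ₜ[ℂ]
                resMap n k l (Finsupp.single fJ 1)))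
      = (((k + 1).factorial : ℂ))⁻¹ •
          ∑ l : Fin (k + 1), ∑ σ : Equiv.Perm (Fin (k + 1)),
            lam (v (σ⁻¹ l)) •
              ((PiTensorProduct.tprod ℂ (fun i : Fin k => v (σ⁻¹ (l.succAbove i)))) ⊗ₜ[ℂ]
                resMap n k l
                  (Finsupp.single
                    ((σ⁻¹ : Equiv.Perm (Fin (k + 1))).toEmbedding.trans fJ) 1)) := by
  rw [← diagAverage_apply, ← contractRes_tprod_tmul, ← contractRes_diagAverage_tprod_tmul_single]
  exact LinearMap.congr_fun (averaging_contraction_general k n lam) _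
end
end
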